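/- arXiv:1710.06273 — 2 statements merged into one kernel-verified Lean document; each statement's English description precedes it below -/
import Mathlib

section
/- Fix p ∈ (1,∞) and μ, λ > 0. Let f⁻ be the convex closure of F: for η ∈ [0,1]^V, f⁻(η) = inf{ Σ_{S⊆V} α_S F(S) : α_S ≥ 0, Σ_{S⊆V} α_S = 1, Σ_{S⊆V} α_S 1_S = η }. Define Θ_p(w) = inf{ λ Σ_{j : w_j ≠ 0} |w_j|^p / η_j^{p−1} + μ f⁻(η) : η ∈ [0,1]^V with η_j > 0 whenever w_j ≠ 0 }. Then Θ_p is the convex envelope on ℝ^V of F_{μλ}(w) = μ F(supp(w)) + λ ‖w‖_p^p; precisely: (i) Θ_p is convex on ℝ^V; (ii) Θ_p(w) ≤ F_{μλ}(w) for all w ∈ ℝ^V; (iii) every convex function g : ℝ^V → ℝ with g(w) ≤ F_{μλ}(w) for all w satisfies g(w) ≤ Θ_p(w) for all w. -/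
open scoped BigOperators

/-- The convex closure `f⁻` of a set function `F`, defined on `[0,1]^V`. -/
noncomputable def convClosure {V : Type*} [Fintype V] [DecidableEq V]
    (F : Finset V → ℝ) (η : V → ℝ) : ℝ :=
  sInf { t : ℝ | ∃ α : Finset V → ℝ,
    (∀ S, 0 ≤ α S) ∧ (∑ S : Finset V, α S) = 1 ∧
    (∀ i : V, (∑ S : Finset V, if i ∈ S then α S else 0) = η i) ∧
    t = ∑ S : Finset V, α S * F S }

/-- The non-homogeneous `ℓ_p`-relaxation `Θ_p`. -/
noncomputable def thetaP {V : Type*} [Fintype V] [DecidableEq V]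
    (F : Finset V → ℝ) (p lam mu : ℝ) (w : V → ℝ) : ℝ :=
  sInf { t : ℝ | ∃ η : V → ℝ,
    (∀ i, 0 ≤ η i ∧ η i ≤ 1) ∧ (∀ i, w i ≠ 0 → 0 < η i) ∧
    t = lam * (∑ i ∈ Finset.univ.filter (fun i => w i ≠ 0), |w i| ^ p / (η i) ^ (p - 1))
        + mu * convClosure F η }

/-- `α` is a probability distribution on the subsets of `V` with vector of marginals `η`. -/
structure IsSetMixture {V : Type*} [Fintype V] [DecidableEq V]
    (α : Finset V → ℝ) (η : V → ℝ) : Prop where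
  nonneg : ∀ S, 0 ≤ α S
  sum_eq_one : ∑ S : Finset V, α S = 1
  marginal : ∀ i : V, (∑ S : Finset V, if i ∈ S then α S else 0) = η i

/-- The value at `w` of the objective defining `Θ_p`, for a mixture `α` with marginals `η`. -/
noncomputable def mixtureCost {V : Type*} [Fintype V]
    (F : Finset V → ℝ) (p lam mu : ℝ) (w η : V → ℝ) (α : Finset V → ℝ) : ℝ :=
  lam * (∑ i, η i * |w i / η i| ^ p) + mu * ∑ S : Finset V, α S * F S

theorem abs_rpow_div_rpow_sub_one {p x y : ℝ} (hp : 1 < p) (hy : 0 ≤ y) (hxy : x ≠ 0 → 0 < y) :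
    |x| ^ p / y ^ (p - 1) = y * |x / y| ^ p := by
  have hp0 : p ≠ 0 := by linarith
  by_cases hx : x = 0
  · simp [hx, Real.zero_rpow hp0]
  · have hy' := hxy hx
    rw [abs_div, abs_of_pos hy', Real.div_rpow (abs_nonneg x) hy, Real.rpow_sub_one hy'.ne']
    have := (Real.rpow_pos_of_pos hy' p).ne'
    field_simp

theorem abs_convex_combination_rpow_le {p a b x y : ℝ} (hp : 1 ≤ p) (ha : 0 ≤ a) (hb : 0 ≤ b)
    (hab : a + b = 1) : |a * x + b * y| ^ p ≤ a * |x| ^ p + b * |y| ^ p := by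
  have h := (convexOn_rpow hp).2 (abs_nonneg x) (abs_nonneg y) ha hb hab
  simp only [smul_eq_mul] at h
  refine le_trans (Real.rpow_le_rpow (abs_nonneg _) ?_ (by linarith)) h
  refine (abs_add_le _ _).trans ?_
  rw [abs_mul, abs_mul, abs_of_nonneg ha, abs_of_nonneg hb]

/-- Joint convexity of the perspective `(x, y) ↦ y * |x / y| ^ p`. -/
theorem perspective_abs_rpow_convex {p a b x₁ x₂ y₁ y₂ : ℝ} (hp : 1 < p)
    (ha : 0 ≤ a) (hb : 0 ≤ b) (hy₁ : 0 ≤ y₁) (hy₂ : 0 ≤ y₂)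
    (hxy₁ : x₁ ≠ 0 → 0 < y₁) (hxy₂ : x₂ ≠ 0 → 0 < y₂) :
    (a * y₁ + b * y₂) * |(a * x₁ + b * x₂) / (a * y₁ + b * y₂)| ^ p ≤
      a * (y₁ * |x₁ / y₁| ^ p) + b * (y₂ * |x₂ / y₂| ^ p) := by
  have cancel : ∀ {x y : ℝ}, (x ≠ 0 → 0 < y) → y * (x / y) = x := by
    intro x y h
    by_cases hx : x = 0
    · simp [hx]
    · exact mul_div_cancel₀ x (h hx).ne'
  set y := a * y₁ + b * y₂ with hy
  have hy0 : 0 ≤ y := by positivity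
  rcases hy0.eq_or_lt with h0 | hpos
  · rw [← h0, zero_mul]
    positivity
  · have hsum : a * y₁ / y + b * y₂ / y = 1 := by
      rw [← add_div, ← hy, div_self hpos.ne']
    have h := abs_convex_combination_rpow_le (x := x₁ / y₁) (y := x₂ / y₂) hp.le
      (show 0 ≤ a * y₁ / y by positivity) (show 0 ≤ b * y₂ / y by positivity) hsum
    have harg : a * y₁ / y * (x₁ / y₁) + b * y₂ / y * (x₂ / y₂) = (a * x₁ + b * x₂) / y := by
      conv_rhs => rw [← cancel hxy₁, ← cancel hxy₂]
      ring
    rw [harg] at h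
    refine (mul_le_mul_of_nonneg_left h hpos.le).trans_eq ?_
    field_simp

theorem sum_prod_mul_prod_compl {V : Type*} [Fintype V] [DecidableEq V] (f g : V → ℝ) :
    ∑ S : Finset V, (∏ i ∈ S, f i) * ∏ i ∈ Finset.univ \ S, g i = ∏ i, (f i + g i) := by
  rw [Finset.prod_add, Finset.powerset_univ]

theorem exists_isSetMixture {V : Type*} [Fintype V] [DecidableEq V] {η : V → ℝ}
    (hη : ∀ i, 0 ≤ η i ∧ η i ≤ 1) : ∃ α, IsSetMixture α η := by
  refine ⟨fun S => (∏ i ∈ S, η i) * ∏ i ∈ Finset.univ \ S, (1 - η i), ?_, ?_, ?_⟩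
  · exact fun S => mul_nonneg (Finset.prod_nonneg fun i _ => (hη i).1)
      (Finset.prod_nonneg fun i _ => sub_nonneg.2 (hη i).2)
  · simp [sum_prod_mul_prod_compl]
  · intro i
    have h := sum_prod_mul_prod_compl η (fun j => if j = i then 0 else 1 - η j)
    have hprod : ∏ j, (η j + if j = i then 0 else 1 - η j) = η i := by
      rw [Finset.prod_eq_single i]
      · simp
      · intro j _ hj
        simp [hj]
      · simp
    rw [hprod] at h
    rw [← h]
    refine Finset.sum_congr rfl fun S _ => ?_
    split_ifs with hi
    · congr 1
      refine Finset.prod_congr rfl fun j hj => ?_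
      have : j ≠ i := by
        rintro rfl
        simp [hi] at hj
      simp [this]
    · rw [Finset.prod_eq_zero (i := i) (s := Finset.univ \ S) (by simp [hi]) (by simp), mul_zero]

section

variable {V : Type*} [Fintype V] {F : Finset V → ℝ} {p lam mu : ℝ}
  {w η : V → ℝ} {α : Finset V → ℝ}

theorem sum_filter_eq_sum_perspective (hp : 1 < p) (hη : ∀ i, 0 ≤ η i)
    (hw : ∀ i, w i ≠ 0 → 0 < η i) :
    ∑ i ∈ Finset.univ.filter (fun i => w i ≠ 0), |w i| ^ p / (η i) ^ (p - 1) =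
      ∑ i, η i * |w i / η i| ^ p := by
  rw [Finset.sum_filter]
  refine Finset.sum_congr rfl fun i _ => ?_
  rw [abs_rpow_div_rpow_sub_one hp (hη i) (hw i), ite_eq_left_iff, not_not]
  intro h
  simp [h, Real.zero_rpow (show p ≠ 0 by linarith)]

theorem mixtureCost_convex_combination_le {w₁ w₂ η₁ η₂ : V → ℝ} {α₁ α₂ : Finset V → ℝ}
    {a b : ℝ} (hp : 1 < p) (hlam : 0 ≤ lam) (ha : 0 ≤ a) (hb : 0 ≤ b)
    (hη₁ : ∀ i, 0 ≤ η₁ i) (hη₂ : ∀ i, 0 ≤ η₂ i)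
    (hw₁ : ∀ i, w₁ i ≠ 0 → 0 < η₁ i) (hw₂ : ∀ i, w₂ i ≠ 0 → 0 < η₂ i) :
    mixtureCost F p lam mu (a • w₁ + b • w₂) (a • η₁ + b • η₂) (a • α₁ + b • α₂) ≤
      a * mixtureCost F p lam mu w₁ η₁ α₁ + b * mixtureCost F p lam mu w₂ η₂ α₂ := by
  have hpersp := mul_le_mul_of_nonneg_left (Finset.sum_le_sum fun i (_ : i ∈ Finset.univ) =>
    perspective_abs_rpow_convex hp ha hb (hη₁ i) (hη₂ i) (hw₁ i) (hw₂ i)) hlam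
  rw [Finset.sum_add_distrib, ← Finset.mul_sum, ← Finset.mul_sum] at hpersp
  have hset : ∑ S, (a * α₁ S + b * α₂ S) * F S =
      a * ∑ S, α₁ S * F S + b * ∑ S, α₂ S * F S := by
    rw [Finset.mul_sum, Finset.mul_sum, ← Finset.sum_add_distrib]
    exact Finset.sum_congr rfl fun S _ => by ring
  simp only [mixtureCost, Pi.add_apply, Pi.smul_apply, smul_eq_mul, hset]
  linarith

variable [DecidableEq V]

theorem IsSetMixture.nonneg_marginal (h : IsSetMixture α η) (i : V) : 0 ≤ η i := by
  rw [← h.marginal i]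
  exact Finset.sum_nonneg fun S _ => by split_ifs <;> simp [h.nonneg S]

theorem IsSetMixture.marginal_le_one (h : IsSetMixture α η) (i : V) : η i ≤ 1 := by
  rw [← h.marginal i, ← h.sum_eq_one]
  exact Finset.sum_le_sum fun S _ => by split_ifs <;> simp [h.nonneg S]

theorem IsSetMixture.convex_combination {α₁ α₂ : Finset V → ℝ} {η₁ η₂ : V → ℝ} {a b : ℝ}
    (h₁ : IsSetMixture α₁ η₁) (h₂ : IsSetMixture α₂ η₂) (ha : 0 ≤ a) (hb : 0 ≤ b)
    (hab : a + b = 1) : IsSetMixture (a • α₁ + b • α₂) (a • η₁ + b • η₂) where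
  nonneg S := by
    have := h₁.nonneg S
    have := h₂.nonneg S
    simp only [Pi.add_apply, Pi.smul_apply, smul_eq_mul]
    positivity
  sum_eq_one := by
    simp [Finset.sum_add_distrib, ← Finset.mul_sum, h₁.sum_eq_one, h₂.sum_eq_one, hab]
  marginal i := by
    simp only [Pi.add_apply, Pi.smul_apply, smul_eq_mul]
    rw [← h₁.marginal i, ← h₂.marginal i, Finset.mul_sum, Finset.mul_sum,
      ← Finset.sum_add_distrib]
    exact Finset.sum_congr rfl fun S _ => by split_ifs <;> simp

theorem isSetMixture_single (A : Finset V) :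
    IsSetMixture (fun S => if S = A then (1 : ℝ) else 0) (fun i => if i ∈ A then 1 else 0) where
  nonneg S := by split_ifs <;> norm_num
  sum_eq_one := by simp
  marginal i := by
    rw [Finset.sum_eq_single A]
    · simp
    · intro S _ hS
      simp [hS]
    · simp

theorem IsSetMixture.sum_mul_sum (h : IsSetMixture α η) (c : V → ℝ) :
    ∑ S : Finset V, α S * ∑ i, (if i ∈ S then c i else 0) = ∑ i, η i * c i := by
  simp_rw [Finset.mul_sum]
  rw [Finset.sum_comm]
  refine Finset.sum_congr rfl fun i _ => ?_
  rw [← h.marginal i, Finset.sum_mul]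
  exact Finset.sum_congr rfl fun S _ => by split_ifs <;> simp

theorem convClosure_nonneg (hF : ∀ A, 0 ≤ F A) (η : V → ℝ) : 0 ≤ convClosure F η := by
  refine Real.sInf_nonneg ?_
  rintro t ⟨α, hα, -, -, rfl⟩
  exact Finset.sum_nonneg fun S _ => mul_nonneg (hα S) (hF S)

theorem convClosure_le (hF : ∀ A, 0 ≤ F A) (h : IsSetMixture α η) :
    convClosure F η ≤ ∑ S : Finset V, α S * F S := by
  refine csInf_le ⟨0, ?_⟩ ⟨α, h.nonneg, h.sum_eq_one, h.marginal, rfl⟩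
  rintro t ⟨β, hβ, -, -, rfl⟩
  exact Finset.sum_nonneg fun S _ => mul_nonneg (hβ S) (hF S)

theorem thetaP_le_mixtureCost (hp : 1 < p) (hlam : 0 ≤ lam) (hmu : 0 ≤ mu)
    (hF : ∀ A, 0 ≤ F A) (h : IsSetMixture α η) (hw : ∀ i, w i ≠ 0 → 0 < η i) :
    thetaP F p lam mu w ≤ mixtureCost F p lam mu w η α := by
  have hmem : thetaP F p lam mu w ≤
      lam * (∑ i ∈ Finset.univ.filter (fun i => w i ≠ 0), |w i| ^ p / (η i) ^ (p - 1))
        + mu * convClosure F η := by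
    refine csInf_le ⟨0, ?_⟩ ⟨η, fun i => ⟨h.nonneg_marginal i, h.marginal_le_one i⟩, hw, rfl⟩
    rintro t ⟨ζ, hζ, -, rfl⟩
    have hsum : 0 ≤ ∑ i ∈ Finset.univ.filter (fun i => w i ≠ 0), |w i| ^ p / (ζ i) ^ (p - 1) :=
      Finset.sum_nonneg fun i _ => div_nonneg (by positivity) (Real.rpow_nonneg (hζ i).1 _)
    have := convClosure_nonneg hF ζ
    positivity
  rw [sum_filter_eq_sum_perspective hp h.nonneg_marginal hw] at hmem
  refine hmem.trans ?_
  unfold mixtureCost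
  gcongr
  exact convClosure_le hF h

theorem le_thetaP_of_forall_mixtureCost (hp : 1 < p) (hmu : 0 < mu) {c : ℝ}
    (hc : ∀ η α, IsSetMixture α η → (∀ i, w i ≠ 0 → 0 < η i) →
      c ≤ mixtureCost F p lam mu w η α) :
    c ≤ thetaP F p lam mu w := by
  refine le_csInf ⟨_, fun _ => 1, by simp, by simp, rfl⟩ ?_
  rintro t ⟨η, hη, hw, rfl⟩
  rw [sum_filter_eq_sum_perspective hp (fun i => (hη i).1) hw]
  obtain ⟨α₀, h₀⟩ := exists_isSetMixture hη
  have key : (c - lam * ∑ i, η i * |w i / η i| ^ p) / mu ≤ convClosure F η := by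
    refine le_csInf ⟨_, α₀, h₀.nonneg, h₀.sum_eq_one, h₀.marginal, rfl⟩ ?_
    rintro t ⟨α, h1, h2, h3, rfl⟩
    have := hc η α ⟨h1, h2, h3⟩ hw
    unfold mixtureCost at this
    rw [div_le_iff₀ hmu]
    linarith
  rw [div_le_iff₀ hmu] at key
  linarith

theorem exists_mixtureCost_lt (hp : 1 < p) (hmu : 0 < mu) {c : ℝ}
    (hc : thetaP F p lam mu w < c) :
    ∃ η α, IsSetMixture α η ∧ (∀ i, w i ≠ 0 → 0 < η i) ∧ mixtureCost F p lam mu w η α < c := by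
  by_contra! hcon
  exact absurd (le_thetaP_of_forall_mixtureCost hp hmu hcon) (not_le.2 hc)

theorem convexOn_thetaP (hp : 1 < p) (hlam : 0 ≤ lam) (hmu : 0 < mu) (hF : ∀ A, 0 ≤ F A) :
    ConvexOn ℝ Set.univ (thetaP F p lam mu) := by
  refine ⟨convex_univ, fun w₁ _ w₂ _ a b ha hb hab => ?_⟩
  refine le_of_forall_pos_le_add fun ε hε => ?_
  obtain ⟨η₁, α₁, h₁, hw₁, hlt₁⟩ := exists_mixtureCost_lt hp hmu
    (lt_add_of_pos_right (thetaP F p lam mu w₁) hε)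
  obtain ⟨η₂, α₂, h₂, hw₂, hlt₂⟩ := exists_mixtureCost_lt hp hmu
    (lt_add_of_pos_right (thetaP F p lam mu w₂) hε)
  have hfeas : ∀ i, (a • w₁ + b • w₂) i ≠ 0 → 0 < (a • η₁ + b • η₂) i := by
    intro i hi
    simp only [Pi.add_apply, Pi.smul_apply, smul_eq_mul] at hi ⊢
    have h1 := mul_nonneg ha (h₁.nonneg_marginal i)
    have h2 := mul_nonneg hb (h₂.nonneg_marginal i)
    by_cases hz : a * w₁ i = 0
    · have hz' : b * w₂ i ≠ 0 := by simpa [hz] using hi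
      have := mul_pos (hb.lt_of_ne' (left_ne_zero_of_mul hz')) (hw₂ i (right_ne_zero_of_mul hz'))
      linarith
    · have := mul_pos (ha.lt_of_ne' (left_ne_zero_of_mul hz)) (hw₁ i (right_ne_zero_of_mul hz))
      linarith
  have hle := (thetaP_le_mixtureCost hp hlam hmu.le hF
    (h₁.convex_combination h₂ ha hb hab) hfeas).trans
    (mixtureCost_convex_combination_le hp hlam ha hb h₁.nonneg_marginal h₂.nonneg_marginal
      hw₁ hw₂)
  have e1 := mul_le_mul_of_nonneg_left hlt₁.le ha
  have e2 := mul_le_mul_of_nonneg_left hlt₂.le hb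
  have e3 : a * ε + b * ε = ε := by rw [← add_mul, hab, one_mul]
  simp only [smul_eq_mul]
  linarith

theorem thetaP_le (hp : 1 < p) (hlam : 0 ≤ lam) (hmu : 0 ≤ mu) (hF : ∀ A, 0 ≤ F A) (w : V → ℝ) :
    thetaP F p lam mu w ≤
      mu * F (Finset.univ.filter (fun i => w i ≠ 0)) + lam * ∑ i, |w i| ^ p := by
  refine (thetaP_le_mixtureCost hp hlam hmu hF
    (isSetMixture_single (Finset.univ.filter fun i => w i ≠ 0)) ?_).trans_eq ?_
  · intro i hi
    simp [hi]
  · have hsum : ∀ i, (if i ∈ Finset.univ.filter (fun i => w i ≠ 0) then (1 : ℝ) else 0) *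
        |w i / (if i ∈ Finset.univ.filter (fun i => w i ≠ 0) then (1 : ℝ) else 0)| ^ p =
        |w i| ^ p := by
      intro i
      by_cases hi : w i = 0
      · simp [hi, Real.zero_rpow (show p ≠ 0 by linarith)]
      · simp [hi]
    simp only [mixtureCost, hsum]
    simp [add_comm]

/-- Jensen's inequality for the mixture of the vectors `x` restricted to the random set `S`. -/
theorem le_of_convexOn_of_isSetMixture {g : (V → ℝ) → ℝ} (hg : ConvexOn ℝ Set.univ g)
    (hgF : ∀ w, g w ≤ mu * F (Finset.univ.filter (fun i => w i ≠ 0)) + lam * ∑ i, |w i| ^ p)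
    (hp : p ≠ 0) (h : IsSetMixture α η) {x : V → ℝ} (hx : ∀ i, x i ≠ 0) :
    g (fun i => η i * x i) ≤
      lam * ∑ i, η i * |x i| ^ p + mu * ∑ S : Finset V, α S * F S := by
  have hjensen := hg.map_sum_le (t := Finset.univ) (w := α)
    (p := fun S i => if i ∈ S then x i else 0) (fun S _ => h.nonneg S) h.sum_eq_one
    (fun _ _ => Set.mem_univ _)
  have hmean : (∑ S : Finset V, α S • fun i => if i ∈ S then x i else 0) =
      fun i => η i * x i := by
    ext i
    rw [Finset.sum_apply, ← h.marginal i, Finset.sum_mul]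
    exact Finset.sum_congr rfl fun S _ => by
      simp only [Pi.smul_apply, smul_eq_mul]
      split_ifs <;> simp
  rw [hmean] at hjensen
  refine hjensen.trans ?_
  have hS : ∀ S : Finset V, g (fun i => if i ∈ S then x i else 0) ≤
      mu * F S + lam * ∑ i, if i ∈ S then |x i| ^ p else 0 := by
    intro S
    refine (hgF _).trans_eq ?_
    have hsupp : Finset.univ.filter (fun i => (if i ∈ S then x i else 0) ≠ 0) = S := by
      ext i
      simp [hx i]
    have hpow : ∀ i, |if i ∈ S then x i else 0| ^ p = if i ∈ S then |x i| ^ p else 0 := by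
      intro i
      split_ifs <;> simp [Real.zero_rpow hp]
    simp only [hsupp, hpow]
  refine (Finset.sum_le_sum fun S _ => mul_le_mul_of_nonneg_left (hS S) (h.nonneg S)).trans_eq ?_
  rw [← h.sum_mul_sum, Finset.mul_sum, Finset.mul_sum, ← Finset.sum_add_distrib]
  exact Finset.sum_congr rfl fun S _ => by ring

theorem le_thetaP_of_convexOn (hp : 1 < p) (hlam : 0 ≤ lam) (hmu : 0 < mu)
    {g : (V → ℝ) → ℝ} (hg : ConvexOn ℝ Set.univ g)
    (hgF : ∀ w, g w ≤ mu * F (Finset.univ.filter (fun i => w i ≠ 0)) + lam * ∑ i, |w i| ^ p)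
    (w : V → ℝ) : g w ≤ thetaP F p lam mu w := by
  have hp0 : p ≠ 0 := by linarith
  refine le_thetaP_of_forall_mixtureCost hp hmu fun η α h hw => ?_
  -- the coordinates outside the support of `w` are perturbed symmetrically by `± ε`
  have hbound : ∀ ε > 0, g w ≤
      mixtureCost F p lam mu w η α + lam * (Fintype.card V * ε ^ p) := by
    intro ε hε
    have hside : ∀ s : ℝ, |s| = ε →
        g (fun i => η i * (if w i ≠ 0 then w i / η i else s)) ≤
          mixtureCost F p lam mu w η α + lam * (Fintype.card V * ε ^ p) := by
      intro s hs
      have hs0 : s ≠ 0 := by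
        rintro rfl
        simp at hs
        linarith
      refine (le_of_convexOn_of_isSetMixture hg hgF hp0 h fun i => ?_).trans ?_
      · split_ifs with hi
        · exact div_ne_zero hi (hw i hi).ne'
        · exact hs0
      · have hsum : ∑ i, η i * |if w i ≠ 0 then w i / η i else s| ^ p ≤
            ∑ i, (η i * |w i / η i| ^ p + ε ^ p) := by
          refine Finset.sum_le_sum fun i _ => ?_
          have hεp : 0 ≤ ε ^ p := by positivity
          split_ifs with hi
          · linarith
          · have := h.nonneg_marginal i
            rw [hs]
            have h1 := mul_le_mul_of_nonneg_right (h.marginal_le_one i) hεp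
            have h2 : 0 ≤ η i * |w i / η i| ^ p := by positivity
            linarith
        rw [Finset.sum_add_distrib, Finset.sum_const, Finset.card_univ, nsmul_eq_mul] at hsum
        have := mul_le_mul_of_nonneg_left hsum hlam
        unfold mixtureCost
        linarith
    have hpos := hside ε (abs_of_pos hε)
    have hneg := hside (-ε) (by rw [abs_neg, abs_of_pos hε])
    have hmid := hg.2 (Set.mem_univ fun i => η i * (if w i ≠ 0 then w i / η i else ε))
      (Set.mem_univ fun i => η i * (if w i ≠ 0 then w i / η i else -ε))
      (show (0 : ℝ) ≤ 1 / 2 by norm_num) (show (0 : ℝ) ≤ 1 / 2 by norm_num) (by norm_num)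
    have hw_mid : ((1 / 2 : ℝ) • (fun i => η i * (if w i ≠ 0 then w i / η i else ε)) +
        (1 / 2 : ℝ) • fun i => η i * (if w i ≠ 0 then w i / η i else -ε)) = w := by
      ext i
      simp only [Pi.add_apply, Pi.smul_apply, smul_eq_mul]
      split_ifs with hi
      · rw [mul_div_cancel₀ _ (hw i hi).ne']
        ring
      · rw [not_not.1 hi]
        ring
    rw [hw_mid] at hmid
    simp only [smul_eq_mul] at hmid
    linarith
  refine le_of_forall_pos_le_add fun δ hδ => ?_
  set K : ℝ := lam * Fintype.card V + 1 with hK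
  have hKpos : 0 < K := by positivity
  have hb := hbound ((δ / K) ^ p⁻¹) (by positivity)
  rw [Real.rpow_inv_rpow (by positivity) hp0] at hb
  have h1 : lam * (Fintype.card V * (δ / K)) ≤ K * (δ / K) := by
    rw [← mul_assoc]
    exact mul_le_mul_of_nonneg_right (by linarith) (by positivity)
  rw [mul_div_cancel₀ δ hKpos.ne'] at h1
  linarith

end

theorem stmt_1 {V : Type*} [Fintype V] [DecidableEq V]
    (p lam mu : ℝ) (hp : 1 < p) (hlam : 0 < lam) (hmu : 0 < mu)
    (F : Finset V → ℝ) (hF0 : F ∅ = 0) (hFnn : ∀ A : Finset V, 0 ≤ F A)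
    (Fml : (V → ℝ) → ℝ)
    (hFml : ∀ w, Fml w = mu * F (Finset.univ.filter (fun i => w i ≠ 0))
        + lam * ∑ i : V, |w i| ^ p) :
    ConvexOn ℝ Set.univ (thetaP F p lam mu) ∧
    (∀ w : V → ℝ, thetaP F p lam mu w ≤ Fml w) ∧
    (∀ g : (V → ℝ) → ℝ, ConvexOn ℝ Set.univ g → (∀ w, g w ≤ Fml w) →
      ∀ w, g w ≤ thetaP F p lam mu w) := by
  obtain rfl : Fml = fun w => mu * F (Finset.univ.filter (fun i => w i ≠ 0))
      + lam * ∑ i : V, |w i| ^ p := funext hFml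
  exact ⟨convexOn_thetaP hp hlam.le hmu hFnn, thetaP_le hp hlam.le hmu.le hFnn,
    fun g hg hgF => le_thetaP_of_convexOn hp hlam.le hmu hg hgF⟩
end

section
/- Let Φ : ℝ^V → ℝ be convex and monotone on the nonnegative orthant (0 ≤ u ≤ v coordinatewise implies Φ(u) ≤ Φ(v)), let α ∈ (0,1), and let w⁰ ∈ ℝ^V have all coordinates nonzero. Then for every w ∈ ℝ^V, Φ(|w|^α) ≤ (1−α) Φ(|w⁰|^α) + α Φ(|w⁰|^{α−1} ∘ |w|), where powers and the product ∘ are taken coordinatewise; moreover equality holds at w = w⁰. -/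
open scoped BigOperators

/-- Tangent-type bound for the concave power `b ↦ b ^ α` at `a`, from weighted AM-GM. -/
lemma rpow_le_weighted_majorant {a b α : ℝ} (ha : 0 < a) (hb : 0 ≤ b) (hα₀ : 0 ≤ α)
    (hα₁ : α ≤ 1) : b ^ α ≤ (1 - α) * a ^ α + α * (a ^ (α - 1) * b) := by
  have hfactor : (a ^ α) ^ (1 - α) * (a ^ (α - 1) * b) ^ α = b ^ α := by
    rw [Real.mul_rpow (by positivity) hb, ← Real.rpow_mul ha.le, ← Real.rpow_mul ha.le,
      ← mul_assoc, ← Real.rpow_add ha, show α * (1 - α) + (α - 1) * α = 0 by ring,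
      Real.rpow_zero, one_mul]
  rw [← hfactor]
  exact Real.geom_mean_le_arith_mean2_weighted (by linarith) hα₀ (by positivity) (by positivity)
    (by ring)

theorem stmt_7 {V : Type*} [Fintype V]
    (Φ : (V → ℝ) → ℝ) (hΦ : ConvexOn ℝ Set.univ Φ)
    (hΦmono : ∀ u v : V → ℝ, (∀ i, 0 ≤ u i) → (∀ i, u i ≤ v i) → Φ u ≤ Φ v)
    (α : ℝ) (hα : α ∈ Set.Ioo (0:ℝ) 1)
    (w0 : V → ℝ) (hw0 : ∀ i, w0 i ≠ 0) :
    (∀ w : V → ℝ,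
      Φ (fun i => |w i| ^ α)
        ≤ (1 - α) * Φ (fun i => |w0 i| ^ α) + α * Φ (fun i => |w0 i| ^ (α - 1) * |w i|)) ∧
    Φ (fun i => |w0 i| ^ α)
      = (1 - α) * Φ (fun i => |w0 i| ^ α) + α * Φ (fun i => |w0 i| ^ (α - 1) * |w0 i|) := by
  obtain ⟨hα₀, hα₁⟩ := hα
  refine ⟨fun w => ?_, ?_⟩
  · refine (hΦmono _ ((1 - α) • (fun i => |w0 i| ^ α) + α • fun i => |w0 i| ^ (α - 1) * |w i|)
      (fun i => by positivity) fun i => ?_).trans ?_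
    · exact rpow_le_weighted_majorant (abs_pos.2 (hw0 i)) (abs_nonneg _) hα₀.le hα₁.le
    · exact hΦ.2 (Set.mem_univ _) (Set.mem_univ _) (by linarith) hα₀.le (by ring)
  · have hbase : (fun i => |w0 i| ^ (α - 1) * |w0 i|) = fun i => |w0 i| ^ α := by
      funext i
      have hi := abs_pos.2 (hw0 i)
      rw [Real.rpow_sub_one hi.ne', div_mul_cancel₀ _ hi.ne']
    rw [hbase]
    ring
end
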